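/- Fix α > 0 and let λ_α⁺(λ) = ∫_ℝ max(η,0) δ_α(λ−η) dη be the exponential-convolution regularization of the positive part, where δ_α is the Gaussian kernel with standard deviation α. Then for every real λ, 0 ≤ λ_α⁺(λ) − max(λ,0) ≤ α/√(2π), with the maximal deviation α/√(2π) attained at λ = 0. In particular, λ_α⁺ converges uniformly on ℝ to λ ↦ max(λ,0) as α → 0⁺. -/

import Mathlib

/-!
Write `g` for the Gaussian density of standard deviation `α`. After the substitution `η = l + t`
and since `g` is even, the regularization is `F l = ∫ max (l + t) 0 * g t`. The pointwise
inequalities `l + t ≤ max (l + t) 0` and `0 ≤ max (l + t) 0`, together with `∫ g = 1` and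
`∫ t * g t = 0`, give `max l 0 ≤ F l` (Jensen's inequality for the positive part). Subadditivity
of the positive part, `max (l + t) 0 ≤ max l 0 + max t 0`, gives `F l ≤ max l 0 + F 0`, and
`F 0 = ∫ t > 0, t * g t = α / √(2π)`. This last bound tends to `0` with `α`, uniformly in `l`.
-/

open MeasureTheory

/-- The centered Gaussian density with standard deviation `α`. -/
noncomputable def gaussDens (α t : ℝ) : ℝ :=
  1 / (Real.sqrt (2 * Real.pi) * α) * Real.exp (-(1 / (2 * α ^ 2)) * t ^ 2)

lemma gaussDens_nonneg {α : ℝ} (hα : 0 < α) (t : ℝ) : 0 ≤ gaussDens α t := by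
  unfold gaussDens; positivity

lemma gaussDens_integrable {α : ℝ} (hα : 0 < α) : Integrable (gaussDens α) :=
  (integrable_exp_neg_mul_sq (b := 1 / (2 * α ^ 2)) (by positivity)).const_mul _

lemma mul_gaussDens_integrable {α : ℝ} (hα : 0 < α) :
    Integrable (fun t => t * gaussDens α t) := by
  have h := (integrable_mul_exp_neg_mul_sq (b := 1 / (2 * α ^ 2)) (by positivity)).const_mul
    (1 / (Real.sqrt (2 * Real.pi) * α))
  refine h.congr (Filter.Eventually.of_forall fun t => ?_)
  simp only [gaussDens]; ring

lemma integral_gaussDens {α : ℝ} (hα : 0 < α) : ∫ t, gaussDens α t = 1 := by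
  simp only [gaussDens]
  rw [integral_const_mul, integral_gaussian]
  have h : Real.pi / (1 / (2 * α ^ 2)) = 2 * Real.pi * α ^ 2 := by field_simp
  have h2 : Real.sqrt (2 * Real.pi) ≠ 0 := by positivity
  rw [h, Real.sqrt_mul (by positivity : 0 ≤ 2 * Real.pi) (α ^ 2), Real.sqrt_sq hα.le]
  field_simp

lemma integral_mul_gaussDens (α : ℝ) : ∫ t, t * gaussDens α t = 0 := by
  have h := integral_neg_eq_self (fun t => t * gaussDens α t) volume
  have hodd : ∀ t, -t * gaussDens α (-t) = -(t * gaussDens α t) := fun t => by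
    simp [gaussDens]
  simp only [hodd, integral_neg] at h
  linarith

lemma max_mul_gaussDens_integrable {α : ℝ} (hα : 0 < α) (l : ℝ) :
    Integrable (fun t => max (l + t) 0 * gaussDens α t) := by
  have h : Integrable (fun t => (l + t) * gaussDens α t) := by
    simp only [add_mul]
    exact ((gaussDens_integrable hα).const_mul l).add (mul_gaussDens_integrable hα)
  refine h.pos_part.congr (Filter.Eventually.of_forall fun t => ?_)
  simp only [max_mul_of_nonneg _ _ (gaussDens_nonneg hα t), zero_mul]

lemma integral_max_mul_gaussDens {α : ℝ} (hα : 0 < α) :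
    ∫ t, max t 0 * gaussDens α t = α / Real.sqrt (2 * Real.pi) := by
  have h1 : (fun t => max t 0 * gaussDens α t) =
      (Set.Ioi (0 : ℝ)).indicator (fun t => t * gaussDens α t) := by
    ext t
    by_cases ht : 0 < t
    · simp [ht, ht.le]
    · simp [ht, not_lt.mp ht]
  rw [h1, integral_indicator measurableSet_Ioi]
  have h2 := integral_rpow_mul_exp_neg_mul_rpow (p := 2) (q := 1) (b := 1 / (2 * α ^ 2))
    (by norm_num) (by norm_num) (by positivity)
  have h3 : ∀ t : ℝ, t * gaussDens α t = 1 / (Real.sqrt (2 * Real.pi) * α) *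
      (t ^ (1 : ℝ) * Real.exp (-(1 / (2 * α ^ 2)) * t ^ (2 : ℝ))) := fun t => by
    rw [Real.rpow_one, Real.rpow_two, gaussDens]; ring
  simp only [h3]
  rw [integral_const_mul, h2]
  have h4 : (-(1 + 1) / 2 : ℝ) = -1 := by norm_num
  have h5 : ((1 + 1) / 2 : ℝ) = 1 := by norm_num
  have h6 : Real.sqrt (2 * Real.pi) ≠ 0 := by positivity
  rw [h4, h5, Real.Gamma_one, Real.rpow_neg_one]
  field_simp

/-- The substitution `η = l + t`, using that the kernel is even. -/
lemma conv_eq (α l : ℝ) :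
    ∫ η : ℝ, max η 0 * (1 / (Real.sqrt (2 * Real.pi) * α) *
      Real.exp (-(l - η) ^ 2 / (2 * α ^ 2))) = ∫ t, max (l + t) 0 * gaussDens α t := by
  rw [← integral_add_left_eq_self _ l]
  congr 1; ext t
  rw [gaussDens]
  congr 3
  ring

lemma conv_bounds {α : ℝ} (hα : 0 < α) (l : ℝ) :
    0 ≤ (∫ t, max (l + t) 0 * gaussDens α t) - max l 0 ∧
      (∫ t, max (l + t) 0 * gaussDens α t) - max l 0 ≤ α / Real.sqrt (2 * Real.pi) := by
  have hg := gaussDens_nonneg hα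
  have hI := max_mul_gaussDens_integrable hα
  have hl := (gaussDens_integrable hα).const_mul
  constructor
  · rw [sub_nonneg]
    refine max_le ?_ (integral_nonneg fun t => mul_nonneg (le_max_right _ _) (hg t))
    calc l = ∫ t, (l * gaussDens α t + t * gaussDens α t) := by
          rw [integral_add (hl l) (mul_gaussDens_integrable hα), integral_const_mul,
            integral_gaussDens hα, integral_mul_gaussDens]; ring
      _ ≤ _ := by
          refine integral_mono ((hl l).add (mul_gaussDens_integrable hα)) (hI l) fun t => ?_
          simp only [← add_mul]
          exact mul_le_mul_of_nonneg_right (le_max_left _ _) (hg t)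
  · rw [sub_le_iff_le_add']
    have h0 : Integrable (fun t => max t 0 * gaussDens α t) := by simpa using hI 0
    calc _ ≤ ∫ t, (max l 0 * gaussDens α t + max t 0 * gaussDens α t) := by
          refine integral_mono (hI l) ((hl _).add h0) fun t => ?_
          simp only [← add_mul]
          refine mul_le_mul_of_nonneg_right (max_le ?_ ?_) (hg t)
          · exact add_le_add (le_max_left _ _) (le_max_left _ _)
          · exact add_nonneg (le_max_right _ _) (le_max_right _ _)
      _ = _ := by
          rw [integral_add (hl _) h0, integral_const_mul, integral_gaussDens hα,
            integral_max_mul_gaussDens hα, mul_one]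

/-- Bounds for the Gaussian-convolution regularization of the positive part:
`0 ≤ λ_α⁺(λ) − max(λ,0) ≤ α/√(2π)` with the maximal deviation attained at `λ = 0`;
in particular `λ_α⁺` converges uniformly on `ℝ` to `λ ↦ max(λ,0)` as `α → 0⁺`. -/
theorem gaussian_convolution_bounds :
    (∀ α : ℝ, 0 < α → ∀ l : ℝ,
      0 ≤ (∫ η : ℝ, max η 0 * (1 / (Real.sqrt (2 * Real.pi) * α) *
              Real.exp (-(l - η) ^ 2 / (2 * α ^ 2)))) - max l 0 ∧
      (∫ η : ℝ, max η 0 * (1 / (Real.sqrt (2 * Real.pi) * α) *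
              Real.exp (-(l - η) ^ 2 / (2 * α ^ 2)))) - max l 0
          ≤ α / Real.sqrt (2 * Real.pi)) ∧
    (∀ α : ℝ, 0 < α →
      (∫ η : ℝ, max η 0 * (1 / (Real.sqrt (2 * Real.pi) * α) *
              Real.exp (-((0 : ℝ) - η) ^ 2 / (2 * α ^ 2)))) - max (0 : ℝ) 0
          = α / Real.sqrt (2 * Real.pi)) ∧
    TendstoUniformly
      (fun (α : ℝ) (l : ℝ) => ∫ η : ℝ, max η 0 * (1 / (Real.sqrt (2 * Real.pi) * α) *
          Real.exp (-(l - η) ^ 2 / (2 * α ^ 2))))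
      (fun l => max l 0) (nhdsWithin 0 (Set.Ioi 0)) := by
  simp only [conv_eq]
  refine ⟨fun α hα l => conv_bounds hα l, fun α hα => ?_, ?_⟩
  · simpa using integral_max_mul_gaussDens hα
  · rw [Metric.tendstoUniformly_iff]
    intro ε hε
    have ht : Filter.Tendsto (fun α : ℝ => α / Real.sqrt (2 * Real.pi))
        (nhdsWithin 0 (Set.Ioi 0)) (nhds 0) := by
      have h : Continuous (fun α : ℝ => α / Real.sqrt (2 * Real.pi)) := by fun_prop
      simpa using (h.tendsto 0).mono_left nhdsWithin_le_nhds
    filter_upwards [self_mem_nhdsWithin, ht.eventually (gt_mem_nhds hε)] with α hα hlt l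
    obtain ⟨h1, h2⟩ := conv_bounds hα l
    rw [dist_comm, Real.dist_eq, abs_of_nonneg h1]
    exact h2.trans_lt hlt
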